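/- For any positive integers m and n, ∑_{k_1+k_2+⋯+k_m=n} ∏_{i=1}^m (k_i m + 1)^{k_i - 1}/(m^{k_i} k_i!) = (n+1)^{n-1}/n!, where the sum ranges over all m-tuples (k_1,…,k_m) of nonnegative integers summing to n and each factor (k_i m + 1)^{k_i - 1} with k_i = 0 is interpreted as 1. -/

import Mathlib

/-- The Abel polynomials divided by factorials. -/
noncomputable def abelA : ℕ → ℝ → ℝ
  | 0, _ => 1
  | (n + 1), x => x * (x + (n + 1)) ^ n / (Nat.factorial (n + 1) : ℝ)

lemma abelA_deriv (n : ℕ) (x : ℝ) : HasDerivAt (abelA (n + 1)) (abelA n (x + 1)) x := by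
  have h : HasDerivAt (fun x : ℝ => x * (x + ((n : ℝ) + 1)) ^ n / (Nat.factorial (n + 1) : ℝ))
      ((1 * (x + ((n : ℝ) + 1)) ^ n + x * ((n : ℝ) * (x + ((n : ℝ) + 1)) ^ (n - 1) * 1))
        / (Nat.factorial (n + 1) : ℝ)) x :=
    ((hasDerivAt_id' x).mul (((hasDerivAt_id' x).add_const _).pow n)).div_const _
  have e : abelA (n + 1) =
      (fun x : ℝ => x * (x + ((n : ℝ) + 1)) ^ n / (Nat.factorial (n + 1) : ℝ)) := by
    funext y
    simp [abelA]
  rw [e]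
  refine h.congr_deriv ?_
  cases n with
  | zero => simp [abelA]
  | succ k =>
    have h0 : (Nat.factorial (k + 1) : ℝ) ≠ 0 := by positivity
    have h1 : ((k : ℝ) + 1 + 1) ≠ 0 := by positivity
    simp only [abelA, Nat.factorial_succ (k + 1), Nat.add_sub_cancel]
    push_cast
    rw [div_eq_div_iff (by positivity) h0, show x + 1 + ((k : ℝ) + 1) = x + (k + 1 + 1) by ring]
    ring

lemma abelA_zero (n : ℕ) : abelA (n + 1) 0 = 0 := by simp [abelA]

lemma abelA_conv (n : ℕ) : ∀ x y : ℝ,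
    ∑ p ∈ Finset.HasAntidiagonal.antidiagonal n, abelA p.1 x * abelA p.2 y = abelA n (x + y) := by
  induction n with
  | zero => intro x y; simp [abelA]
  | succ n ih =>
    intro x y
    rw [Finset.Nat.sum_antidiagonal_succ]
    let f : ℝ → ℝ := fun x => abelA 0 x * abelA (n + 1) y +
      ∑ p ∈ Finset.HasAntidiagonal.antidiagonal n, abelA (p.1 + 1) x * abelA p.2 y - abelA (n + 1) (x + y)
    have hf : ∀ x, HasDerivAt f 0 x := by
      intro x
      have h1 : HasDerivAt (fun x => ∑ p ∈ Finset.HasAntidiagonal.antidiagonal n, abelA (p.1 + 1) x * abelA p.2 y)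
          (∑ p ∈ Finset.HasAntidiagonal.antidiagonal n, abelA p.1 (x + 1) * abelA p.2 y) x :=
        HasDerivAt.fun_sum fun p _ => (abelA_deriv p.1 x).mul_const _
      have h2 : HasDerivAt (fun x => abelA (n + 1) (x + y)) (abelA n (x + y + 1)) x :=
        (abelA_deriv n (x + y)).comp_add_const x y
      have h3 := ((h1.const_add (1 * abelA (n + 1) y)).sub h2)
      rw [ih, show x + 1 + y = x + y + 1 by ring, sub_self] at h3
      exact h3
    have h := is_const_of_deriv_eq_zero (fun x => (hf x).differentiableAt)
      (fun x => (hf x).deriv) x 0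
    have h0 : f 0 = 0 := by simp [f, abelA_zero, abelA.eq_1]
    rw [h0] at h
    exact sub_eq_zero.mp h

lemma sum_tuple_succ (g : ℕ → ℝ) (m n : ℕ) :
    ∑ k ∈ Finset.Nat.antidiagonalTuple (m + 1) n, ∏ i, g (k i) =
      ∑ p ∈ Finset.HasAntidiagonal.antidiagonal n,
        g p.1 * ∑ k ∈ Finset.Nat.antidiagonalTuple m p.2, ∏ i, g (k i) := by
  simp_rw [Finset.mul_sum]
  rw [Finset.sum_sigma']
  refine Finset.sum_bij' (fun k _ => ⟨(k 0, ∑ i, Fin.tail k i), Fin.tail k⟩)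
    (fun q _ => Fin.cons q.1.1 q.2) ?_ ?_ ?_ ?_ ?_
  · intro k hk
    rw [Finset.Nat.mem_antidiagonalTuple, Fin.sum_univ_succ] at hk
    simp [Finset.Nat.mem_antidiagonalTuple, Fin.tail, hk]
  · rintro ⟨⟨a, b⟩, k⟩ hq
    simp only [Finset.mem_sigma, Finset.HasAntidiagonal.mem_antidiagonal, Finset.Nat.mem_antidiagonalTuple] at hq
    simp [Finset.Nat.mem_antidiagonalTuple, Fin.sum_univ_succ, hq.1, hq.2]
  · intro k _
    simp
  · rintro ⟨⟨a, b⟩, k⟩ hq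
    simp only [Finset.mem_sigma, Finset.HasAntidiagonal.mem_antidiagonal, Finset.Nat.mem_antidiagonalTuple] at hq
    simp [hq.2]
  · intro k _
    simp [Fin.prod_univ_succ, Fin.tail]

lemma abelA_tuple (x : ℝ) (m : ℕ) : ∀ n : ℕ,
    ∑ k ∈ Finset.Nat.antidiagonalTuple m n, ∏ i, abelA (k i) x = abelA n (m * x) := by
  induction m with
  | zero =>
    intro n
    cases n with
    | zero => simp [abelA]
    | succ n => simp [abelA_zero]
  | succ m ih =>
    intro n
    rw [sum_tuple_succ (fun j => abelA j x)]
    simp_rw [ih]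
    rw [abelA_conv]
    congr 1
    push_cast
    ring

theorem coefficient_identity_m (m n : ℕ) (hm : 0 < m) (hn : 0 < n) :
    ∑ k ∈ Finset.Nat.antidiagonalTuple m n,
      ∏ i, ((k i : ℝ) * m + 1) ^ (k i - 1) / ((m : ℝ) ^ (k i) * (Nat.factorial (k i) : ℝ))
      = ((n : ℝ) + 1) ^ (n - 1) / (Nat.factorial n : ℝ) := by
  have hm' : (m : ℝ) ≠ 0 := by positivity
  have key : ∀ j : ℕ, ((j : ℝ) * m + 1) ^ (j - 1) / ((m : ℝ) ^ j * (Nat.factorial j : ℝ))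
      = abelA j (1 / m) := by
    intro j
    cases j with
    | zero => simp [abelA]
    | succ j =>
      have h0 : (Nat.factorial (j + 1) : ℝ) ≠ 0 := by positivity
      simp only [abelA, Nat.add_sub_cancel]
      rw [show (1 / (m : ℝ) + (j + 1)) = (((j + 1 : ℕ) : ℝ) * m + 1) / m by
        push_cast; field_simp; ring, div_pow]
      field_simp
      ring
  simp_rw [key]
  rw [abelA_tuple, mul_one_div_cancel hm']
  obtain ⟨k, rfl⟩ : ∃ k, n = k + 1 := ⟨n - 1, by omega⟩
  simp only [abelA, Nat.add_sub_cancel]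
  push_cast
  rw [one_mul, add_comm (1 : ℝ)]
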